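/- Let A₁, A₂ be 2×2 matrix-valued functions and v₁ ≥ v₂ integers as follows: every entry of A₁ and A₂ is analytic on the disk {z : |z| < r} for some r > 0, det A₁(0) ≠ 0, det A₂(0) ≠ 0, and A(t) = A₁(t) · diag(t^{v₁}, t^{v₂}) · A₂(t) for 0 < |t| < r — for instance this holds, with v₁ = 2 ≥ v₂ = 0, when A(t) = [[t+1, t],[t, 0]]. Then, denoting by d₁(t) ≤ d₂(t) the nondecreasingly ordered singular values of A(t), one has log(d₁(t))/log(t) → v₁ and log(d₂(t))/log(t) → v₂ as real t → 0⁺; in particular, for A(t) = [[t+1, t],[t, 0]], log(d₁(t))/log(t) → 2 and log(d₂(t))/log(t) → 0. -/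

import Mathlib

/-!
Factor the smallest power of `t` out of the Smith form: for real `t > 0`,
`A(t) = t ^ v₁ • C(t)`, where `C(t) = A₁(t) · diag(t ^ (v₀ - v₁), 1) · A₂(t)` has a nonnegative
exponent and hence extends continuously to `t = 0`. Moreover `C(0) ≠ 0`, because `A₁(0)` and
`A₂(0)` are invertible and the middle factor is not zero. Comparing characteristic polynomials of
`AᴴA` gives the two symmetric functions of the squared singular values:

* `d₀² + d₁² = ‖A(t)‖²_F = t ^ (2 v₁) · ‖C(t)‖²_F`, with `‖C(t)‖²_F → ‖C(0)‖²_F > 0`;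
* `d₀ d₁ = |det A(t)| = t ^ (v₀ + v₁) · |det A₁(t) det A₂(t)|`, with a positive limit of the last
  factor.

As `d₁² ≤ d₀² + d₁² ≤ 2 d₁²`, the first identity gives `log d₁ = v₁ log t + O(1)`, and then the
second one gives `log d₀ = v₀ log t + O(1)` (`log_div_log_tendsto`). Dividing by `log t → -∞`
yields the limits.

For `[[t + 1, t], [t, 0]]` a polynomial factorization is
`[[0, 1], [1, t]] · diag(t², 1) · [[-1, -1], [t + 1, t]]`.
-/

open Filter Topology Matrix Polynomial

/-- The squared Frobenius norm of a complex `2 × 2` matrix. -/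
noncomputable def frobSq (M : Matrix (Fin 2) (Fin 2) ℂ) : ℝ := ∑ i, ∑ j, ‖M i j‖ ^ 2

lemma frobSq_smul (c : ℂ) (M : Matrix (Fin 2) (Fin 2) ℂ) :
    frobSq (c • M) = ‖c‖ ^ 2 * frobSq M := by
  simp [frobSq, mul_pow]
  ring

lemma frobSq_pos {M : Matrix (Fin 2) (Fin 2) ℂ} (hM : M ≠ 0) : 0 < frobSq M := by
  obtain ⟨i, j, hij⟩ : ∃ i j, M i j ≠ 0 := by
    by_contra! h
    exact hM (Matrix.ext h)
  refine Finset.sum_pos' (fun i _ => Finset.sum_nonneg fun j _ => by positivity)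
    ⟨i, Finset.mem_univ i, ?_⟩
  exact Finset.sum_pos' (fun j _ => by positivity) ⟨j, Finset.mem_univ j, by positivity⟩

lemma continuous_frobSq : Continuous frobSq := by
  unfold frobSq
  fun_prop

lemma trace_conjTranspose_mul_self_eq (M : Matrix (Fin 2) (Fin 2) ℂ) :
    (Mᴴ * M).trace = (frobSq M : ℂ) := by
  simp [frobSq, Matrix.trace, Matrix.mul_apply, Complex.conj_mul', Fin.sum_univ_two]
  ring

/-- The elementary symmetric functions of the squared singular values, read off from the
characteristic polynomial of `MᴴM`. -/
lemma singular_sum_prod {M : Matrix (Fin 2) (Fin 2) ℂ} {d : Fin 2 → ℝ} (h0 : ∀ i, 0 ≤ d i)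
    (h : Matrix.charpoly (Mᴴ * M) = ∏ i, (X - C (((d i) ^ 2 : ℝ) : ℂ))) :
    d 0 ^ 2 + d 1 ^ 2 = frobSq M ∧ d 0 * d 1 = ‖M.det‖ := by
  rw [Matrix.charpoly_fin_two, Fin.prod_univ_two, trace_conjTranspose_mul_self_eq,
    Matrix.det_mul, Matrix.det_conjTranspose] at h
  -- The values at `0` and `1` determine the two nonleading coefficients.
  have e0 := congrArg (Polynomial.eval 0) h
  have e1 := congrArg (Polynomial.eval 1) h
  simp only [eval_add, eval_sub, eval_mul, eval_pow, eval_X, eval_C, Complex.star_def,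
    Complex.conj_mul'] at e0 e1
  have e0' : ‖M.det‖ ^ 2 = d 0 ^ 2 * d 1 ^ 2 := by
    have : (‖M.det‖ : ℂ) ^ 2 = (d 0 : ℂ) ^ 2 * (d 1 : ℂ) ^ 2 := by
      push_cast at e0
      linear_combination e0
    exact_mod_cast this
  constructor
  · have : (d 0 : ℂ) ^ 2 + (d 1 : ℂ) ^ 2 = frobSq M := by
      push_cast at e0 e1
      linear_combination e1 - e0
    exact_mod_cast this
  · rw [← sq_eq_sq₀ (mul_nonneg (h0 0) (h0 1)) (norm_nonneg _), e0', mul_pow]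

/-- A function whose logarithm is `m log t + O(1)` has logarithmic order `m` at `0⁺`. -/
lemma log_div_log_of_bounded {L : ℝ → ℝ} {m : ℝ} {B : ℝ}
    (h : ∀ᶠ t in 𝓝[>] (0 : ℝ), |L t - m * Real.log t| ≤ B) :
    Tendsto (fun t => L t / Real.log t) (𝓝[>] (0 : ℝ)) (𝓝 m) := by
  have hlog := Real.tendsto_log_nhdsGT_zero
  have hz : Tendsto (fun t => (Real.log t)⁻¹ * (L t - m * Real.log t)) (𝓝[>] (0 : ℝ)) (𝓝 0) :=
    hlog.inv_tendsto_atBot.zero_mul_isBoundedUnder_le ⟨B, by simpa using h⟩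
  have h2 := hz.add_const m
  rw [zero_add] at h2
  refine h2.congr' ?_
  filter_upwards [hlog.eventually_lt_atBot 0] with t ht
  field_simp [ht.ne]
  ring

/-- The asymptotics of two ordered nonnegative functions from those of their sum of squares and
of their product. -/
lemma log_div_log_tendsto {x y f g : ℝ → ℝ} {m k : ℤ} {f₀ g₀ : ℝ} (hf₀ : 0 < f₀) (hg₀ : 0 < g₀)
    (hf : Tendsto f (𝓝[>] (0 : ℝ)) (𝓝 f₀)) (hg : Tendsto g (𝓝[>] (0 : ℝ)) (𝓝 g₀))
    (h : ∀ᶠ t in 𝓝[>] (0 : ℝ), 0 ≤ x t ∧ x t ≤ y t ∧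
      x t ^ 2 + y t ^ 2 = (t ^ m) ^ 2 * f t ∧ x t * y t = t ^ m * t ^ k * g t) :
    Tendsto (fun t => Real.log (x t) / Real.log t) (𝓝[>] (0 : ℝ)) (𝓝 (k : ℝ)) ∧
    Tendsto (fun t => Real.log (y t) / Real.log t) (𝓝[>] (0 : ℝ)) (𝓝 (m : ℝ)) := by
  have hlf := (hf.log hf₀.ne').abs.eventually_le_const (lt_add_one _)
  have hlg := (hg.log hg₀.ne').abs.eventually_le_const (lt_add_one _)
  set F := |Real.log f₀| + 1
  set G := |Real.log g₀| + 1
  have key : ∀ᶠ t in 𝓝[>] (0 : ℝ), |Real.log (x t) - k * Real.log t| ≤ G + F + Real.log 2 ∧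
      |Real.log (y t) - m * Real.log t| ≤ F + Real.log 2 := by
    filter_upwards [h, hlf, hlg, hf.eventually_const_lt hf₀, hg.eventually_const_lt hg₀,
      self_mem_nhdsWithin] with t ⟨hx, hxy, hs, hp⟩ hlf hlg hft hgt ht
    have ht : 0 < t := ht
    have htm : 0 < t ^ m := zpow_pos ht m
    have htk : 0 < t ^ k := zpow_pos ht k
    have hpp : 0 < x t * y t := hp ▸ by positivity
    have hx' : 0 < x t := hx.lt_of_ne fun h => by simp [← h] at hpp
    have hy' : 0 < y t := hx'.trans_le hxy
    -- `y² ≤ x² + y² ≤ 2 y²` on the logarithmic scale.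
    have h1 : Real.log (y t ^ 2) ≤ Real.log ((t ^ m) ^ 2 * f t) :=
      Real.log_le_log (by positivity) (by nlinarith)
    have h2 : Real.log ((t ^ m) ^ 2 * f t) ≤ Real.log (2 * y t ^ 2) :=
      Real.log_le_log (by positivity) (by nlinarith)
    have h3 := congrArg Real.log hp
    rw [Real.log_mul (by positivity) (by positivity), Real.log_mul (by positivity) (by positivity),
      Real.log_mul (by positivity) (by positivity), Real.log_zpow, Real.log_zpow] at h3
    rw [Real.log_mul (by positivity) (by positivity), Real.log_pow, Real.log_pow,
      Real.log_zpow] at h1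
    rw [Real.log_mul (by positivity) (by positivity), Real.log_mul (by positivity) (by positivity),
      Real.log_pow, Real.log_pow, Real.log_zpow] at h2
    push_cast at h1 h2
    have := Real.log_pos one_lt_two
    rw [abs_le] at hlf hlg ⊢
    rw [abs_le]
    refine ⟨⟨?_, ?_⟩, ?_, ?_⟩ <;> linarith
  exact ⟨log_div_log_of_bounded (key.mono fun _ h => h.1),
    log_div_log_of_bounded (key.mono fun _ h => h.2)⟩

/-- The limits for a matrix function with a continuous Smith factorization near `0`. -/
lemma singular_tendsto {r : ℝ} (hr : 0 < r) {A A₁ A₂ : ℂ → Matrix (Fin 2) (Fin 2) ℂ}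
    (hA₁ : ContinuousAt A₁ 0) (hA₂ : ContinuousAt A₂ 0)
    (hd₁ : (A₁ 0).det ≠ 0) (hd₂ : (A₂ 0).det ≠ 0) {v : Fin 2 → ℤ} (hv : v 1 ≤ v 0)
    (hA : ∀ t : ℂ, 0 < ‖t‖ → ‖t‖ < r →
      A t = A₁ t * Matrix.diagonal (fun i => t ^ (v i)) * A₂ t)
    {d : ℝ → Fin 2 → ℝ}
    (hd : ∀ t ∈ Set.Ioo (0 : ℝ) r, (∀ i, 0 ≤ d t i) ∧ d t 0 ≤ d t 1 ∧
      Matrix.charpoly ((A (t : ℂ))ᴴ * A (t : ℂ)) =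
        ∏ i, (Polynomial.X - Polynomial.C ((((d t i) ^ 2 : ℝ)) : ℂ))) :
    Tendsto (fun t : ℝ => Real.log (d t 0) / Real.log t) (𝓝[>] (0 : ℝ)) (𝓝 ((v 0 : ℝ))) ∧
    Tendsto (fun t : ℝ => Real.log (d t 1) / Real.log t) (𝓝[>] (0 : ℝ)) (𝓝 ((v 1 : ℝ))) := by
  obtain ⟨n, hn⟩ := Int.eq_ofNat_of_zero_le (sub_nonneg.2 hv)
  let E : ℂ → Matrix (Fin 2) (Fin 2) ℂ := fun t => Matrix.diagonal ![t ^ n, 1]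
  have hE : Continuous E := by
    refine Continuous.matrix_diagonal (continuous_pi fun i => ?_)
    fin_cases i
    · exact continuous_pow n
    · exact continuous_const
  let C₀ : ℂ → Matrix (Fin 2) (Fin 2) ℂ := fun t => A₁ t * E t * A₂ t
  have hC : ContinuousAt C₀ 0 := (hA₁.mul hE.continuousAt).mul hA₂
  have hC0 : C₀ 0 ≠ 0 := by
    intro h
    have u₁ : IsUnit (A₁ 0) := (Matrix.isUnit_iff_isUnit_det _).2 hd₁.isUnit
    have u₂ : IsUnit (A₂ 0) := (Matrix.isUnit_iff_isUnit_det _).2 hd₂.isUnit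
    have hE0 : E 0 = 0 := by
      have h' : A₁ 0 * E 0 = 0 := u₂.mul_left_eq_zero.1 h
      exact u₁.mul_right_eq_zero.1 h'
    simpa [E] using congrFun (congrFun hE0 1) 1
  have hcast : Tendsto (fun t : ℝ => (t : ℂ)) (𝓝[>] (0 : ℝ)) (𝓝 0) := by
    simpa using (Complex.continuous_ofReal.tendsto 0).mono_left nhdsWithin_le_nhds
  have hf : Tendsto (fun t : ℝ => frobSq (C₀ t)) (𝓝[>] (0 : ℝ)) (𝓝 (frobSq (C₀ 0))) :=
    (continuous_frobSq.tendsto _).comp (Tendsto.comp hC hcast)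
  have hdet : Continuous fun M : Matrix (Fin 2) (Fin 2) ℂ => M.det := continuous_id.matrix_det
  have hg : Tendsto (fun t : ℝ => ‖(A₁ t).det * (A₂ t).det‖) (𝓝[>] (0 : ℝ))
      (𝓝 ‖(A₁ 0).det * (A₂ 0).det‖) :=
    (((hdet.tendsto _).comp (Tendsto.comp hA₁ hcast)).mul
      ((hdet.tendsto _).comp (Tendsto.comp hA₂ hcast))).norm
  refine log_div_log_tendsto (frobSq_pos hC0) (norm_pos_iff.2 (mul_ne_zero hd₁ hd₂)) hf hg ?_
  filter_upwards [Ioo_mem_nhdsGT hr] with t ht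
  obtain ⟨h0, hle, hch⟩ := hd t ht
  obtain ⟨hs, hp⟩ := singular_sum_prod h0 hch
  have htn : ‖(t : ℂ)‖ = t := by simp [abs_of_pos ht.1]
  have ht0 : (t : ℂ) ≠ 0 := by exact_mod_cast ht.1.ne'
  have hAt := hA t (by rw [htn]; exact ht.1) (by rw [htn]; exact ht.2)
  have hdiag : Matrix.diagonal (fun i => (t : ℂ) ^ v i) = (t : ℂ) ^ v 1 • E t := by
    have hv0 : v 0 = v 1 + n := by omega
    ext i j
    fin_cases i <;> fin_cases j <;> simp [E, hv0, zpow_add₀ ht0]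
  refine ⟨h0 0, hle, ?_, ?_⟩
  · rw [hs, hAt, hdiag, Matrix.mul_smul, Matrix.smul_mul, frobSq_smul, norm_zpow, htn]
  · rw [hp, hAt, Matrix.det_mul, Matrix.det_mul, Matrix.det_diagonal, Fin.prod_univ_two]
    simp only [norm_mul, norm_zpow, htn]
    ring

/-- Continuity of a matrix function from analyticity of its entries. -/
lemma continuousAt_of_analytic_entries {r : ℝ} (hr : 0 < r) {A : ℂ → Matrix (Fin 2) (Fin 2) ℂ}
    (h : ∀ i j, AnalyticOnNhd ℂ (fun z => A z i j) (Metric.ball 0 r)) : ContinuousAt A 0 :=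
  continuousAt_pi.2 fun i => continuousAt_pi.2 fun j =>
    (h i j 0 (Metric.mem_ball_self hr)).continuousAt

lemma example_factorization (t : ℂ) :
    !![t + 1, t; t, 0] =
      !![0, 1; 1, t] * Matrix.diagonal ![t ^ (2 : ℤ), t ^ (0 : ℤ)] * !![-1, -1; t + 1, t] := by
  have hD : Matrix.diagonal ![t ^ (2 : ℤ), t ^ (0 : ℤ)] = !![t ^ 2, 0; 0, 1] := by
    ext i j
    fin_cases i <;> fin_cases j <;> simp
  rw [hD, Matrix.mul_fin_two, Matrix.mul_fin_two]
  congr 3 <;> ring_nf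

lemma example_analytic_left (i j : Fin 2) (s : Set ℂ) :
    AnalyticOnNhd ℂ (fun z : ℂ => (!![0, 1; 1, z] : Matrix (Fin 2) (Fin 2) ℂ) i j) s := by
  fin_cases i <;> fin_cases j <;> intro z _ <;> simp <;> fun_prop

lemma example_analytic_right (i j : Fin 2) (s : Set ℂ) :
    AnalyticOnNhd ℂ (fun z : ℂ => (!![-1, -1; z + 1, z] : Matrix (Fin 2) (Fin 2) ℂ) i j) s := by
  fin_cases i <;> fin_cases j <;> intro z _ <;> simp <;> fun_prop

/-- The 2×2 case of the corollary on singular values versus invariant factors, together with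
the concrete instance `A(t) = [[t+1, t],[t, 0]]`, whose invariant factors are `v₁ = 2 ≥ v₂ = 0`:
(1) the general 2×2 statement; (2) the existence of an analytic Smith factorization
`A(t) = A₁(t)·diag(t², 1)·A₂(t)` for the concrete matrix; (3) the limits
`log d₁(t)/log t → 2` and `log d₂(t)/log t → 0` for the concrete matrix. -/
theorem singularValues_tendsto_invariantFactors_two_by_two :
    (∀ (r : ℝ), 0 < r →
      ∀ (A A₁ A₂ : ℂ → Matrix (Fin 2) (Fin 2) ℂ),
        (∀ i j, AnalyticOnNhd ℂ (fun z => A₁ z i j) (Metric.ball 0 r)) →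
        (∀ i j, AnalyticOnNhd ℂ (fun z => A₂ z i j) (Metric.ball 0 r)) →
        (A₁ 0).det ≠ 0 → (A₂ 0).det ≠ 0 →
        ∀ v : Fin 2 → ℤ, v 1 ≤ v 0 →
        (∀ t : ℂ, 0 < ‖t‖ → ‖t‖ < r →
          A t = A₁ t * Matrix.diagonal (fun i => t ^ (v i)) * A₂ t) →
        ∀ d : ℝ → Fin 2 → ℝ,
        (∀ t ∈ Set.Ioo (0 : ℝ) r, (∀ i, 0 ≤ d t i) ∧ d t 0 ≤ d t 1 ∧
          Matrix.charpoly ((A (t : ℂ))ᴴ * A (t : ℂ)) =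
            ∏ i, (Polynomial.X - Polynomial.C ((((d t i) ^ 2 : ℝ)) : ℂ))) →
        (Tendsto (fun t : ℝ => Real.log (d t 0) / Real.log t) (𝓝[>] (0 : ℝ)) (𝓝 ((v 0 : ℝ))) ∧
         Tendsto (fun t : ℝ => Real.log (d t 1) / Real.log t) (𝓝[>] (0 : ℝ)) (𝓝 ((v 1 : ℝ)))))
    ∧
    (∃ r : ℝ, 0 < r ∧ ∃ A₁ A₂ : ℂ → Matrix (Fin 2) (Fin 2) ℂ,
        (∀ i j, AnalyticOnNhd ℂ (fun z => A₁ z i j) (Metric.ball 0 r)) ∧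
        (∀ i j, AnalyticOnNhd ℂ (fun z => A₂ z i j) (Metric.ball 0 r)) ∧
        (A₁ 0).det ≠ 0 ∧ (A₂ 0).det ≠ 0 ∧
        (∀ t : ℂ, 0 < ‖t‖ → ‖t‖ < r →
          !![t + 1, t; t, 0] =
            A₁ t * Matrix.diagonal ![t ^ (2 : ℤ), t ^ (0 : ℤ)] * A₂ t))
    ∧
    (∀ d : ℝ → Fin 2 → ℝ,
      (∀ t : ℝ, 0 < t → (∀ i, 0 ≤ d t i) ∧ d t 0 ≤ d t 1 ∧
        Matrix.charpoly ((!![(t : ℂ) + 1, (t : ℂ); (t : ℂ), 0])ᴴ *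
            !![(t : ℂ) + 1, (t : ℂ); (t : ℂ), 0]) =
          ∏ i, (Polynomial.X - Polynomial.C ((((d t i) ^ 2 : ℝ)) : ℂ))) →
      Tendsto (fun t : ℝ => Real.log (d t 0) / Real.log t) (𝓝[>] (0 : ℝ)) (𝓝 (2 : ℝ)) ∧
      Tendsto (fun t : ℝ => Real.log (d t 1) / Real.log t) (𝓝[>] (0 : ℝ)) (𝓝 (0 : ℝ))) := by
  refine ⟨?_, ?_, ?_⟩
  · intro r hr A A₁ A₂ h₁ h₂ hd₁ hd₂ v hv hA d hd
    exact singular_tendsto hr (continuousAt_of_analytic_entries hr h₁)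
      (continuousAt_of_analytic_entries hr h₂) hd₁ hd₂ hv hA hd
  · exact ⟨1, one_pos, fun t => !![0, 1; 1, t], fun t => !![-1, -1; t + 1, t],
      fun i j => example_analytic_left i j _, fun i j => example_analytic_right i j _,
      by simp [Matrix.det_fin_two], by simp [Matrix.det_fin_two],
      fun t _ _ => example_factorization t⟩
  · intro d hd
    have h := singular_tendsto (A := fun t => !![t + 1, t; t, 0]) (v := ![2, 0]) (d := d) one_pos
      (continuousAt_of_analytic_entries one_pos fun i j => example_analytic_left i j _)
      (continuousAt_of_analytic_entries one_pos fun i j => example_analytic_right i j _)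
      (by simp [Matrix.det_fin_two]) (by simp [Matrix.det_fin_two]) (by simp)
      (fun t _ _ => by
        have hv : (fun i => t ^ (![2, 0] : Fin 2 → ℤ) i) = ![t ^ (2 : ℤ), t ^ (0 : ℤ)] := by
          ext i
          fin_cases i <;> rfl
        rw [hv]
        exact example_factorization t)
      (fun t ht => hd t ht.1)
    simpa using h
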